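/- Let Ω ⊂ ℝ^d be open bounded, q ∈ C¹(Ω̄) with 0 < c₀ ≤ q, and u ∈ H²(Ω) ∩ H₀¹(Ω) with −div(q∇u) = f in Ω. Let p be a function with p, p/q, and ∇(p/q) sufficiently regular (p ∈ H¹(Ω) ∩ L^∞(Ω)), and set φ = (p/q)·u ∈ H₀¹(Ω). Then ∫_Ω p ∇u·∇φ dx = (1/2) ∫_Ω (p/q)² (q|∇u|² + f u) dx. -/

import Mathlib

open MeasureTheory
open scoped RealInnerProductSpace

/-- Divergence of a vector field on Euclidean space. -/
noncomputable def ediv {d : ℕ}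
    (V : EuclideanSpace ℝ (Fin d) → EuclideanSpace ℝ (Fin d))
    (x : EuclideanSpace ℝ (Fin d)) : ℝ :=
  ∑ i, fderiv ℝ V x (EuclideanSpace.single i 1) i

lemma bdd_of_loc {d : ℕ} {Ω : Set (EuclideanSpace ℝ (Fin d))}
    (hΩb : Bornology.IsBounded Ω) (h : EuclideanSpace ℝ (Fin d) → ℝ)
    (H : ∀ x ∈ closure Ω, ∃ C, ∀ᶠ y in nhdsWithin x Ω, h y ≤ C) :
    ∃ C, ∀ y ∈ Ω, h y ≤ C := by
  have hc : IsCompact (closure Ω) := hΩb.isCompact_closure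
  have key : ∃ C, ∀ y ∈ closure Ω, y ∈ Ω → h y ≤ C := by
    refine hc.induction_on (p := fun s => ∃ C, ∀ y ∈ s, y ∈ Ω → h y ≤ C) ?_ ?_ ?_ ?_
    · exact ⟨0, by simp⟩
    · rintro s t hst ⟨C, hC⟩
      exact ⟨C, fun y hy => hC y (hst hy)⟩
    · rintro s t ⟨C, hC⟩ ⟨D, hD⟩
      refine ⟨max C D, fun y hy hyΩ => ?_⟩
      rcases hy with hy | hy
      · exact (hC y hy hyΩ).trans (le_max_left _ _)
      · exact (hD y hy hyΩ).trans (le_max_right _ _)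
    · intro x hx
      obtain ⟨C, hC⟩ := H x hx
      rw [eventually_nhdsWithin_iff] at hC
      exact ⟨_, mem_nhdsWithin_of_mem_nhds hC, C, fun y hy hyΩ => hy hyΩ⟩
  obtain ⟨C, hC⟩ := key
  exact ⟨C, fun y hy => hC y (subset_closure hy) hy⟩

/-- local C^1 data -/
lemma loc_data {d : ℕ} {F : Type*} [NormedAddCommGroup F] [NormedSpace ℝ F]
    {Ω : Set (EuclideanSpace ℝ (Fin d))} (hΩ : IsOpen Ω)
    (g : EuclideanSpace ℝ (Fin d) → F) {n : ℕ} {x : EuclideanSpace ℝ (Fin d)} (hx : x ∈ closure Ω)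
    (hg : ContDiffWithinAt ℝ (n + 1 : ℕ) g (closure Ω) x) :
    ∃ G : EuclideanSpace ℝ (Fin d) → (EuclideanSpace ℝ (Fin d) →L[ℝ] F),
      ContDiffWithinAt ℝ n G (closure Ω) x ∧
      ∃ V, IsOpen V ∧ x ∈ V ∧ ∀ y ∈ V, y ∈ Ω → fderiv ℝ g y = G y := by
  have h1 : ContDiffWithinAt ℝ ((n : WithTop ℕ∞) + 1) g (closure Ω) x := by exact_mod_cast hg
  rw [contDiffWithinAt_succ_iff_hasFDerivWithinAt' (by simp)] at h1
  obtain ⟨U, hU, hUs, -, G, hG, hGc⟩ := h1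
  rw [Set.insert_eq_of_mem hx] at hU
  obtain ⟨V, hV, hxV, hVU⟩ := mem_nhdsWithin.1 hU
  refine ⟨G, hGc, V, hV, hxV, fun y hy hyΩ => ?_⟩
  have := hG y (hVU ⟨hy, subset_closure hyΩ⟩)
  exact (this.hasFDerivAt (Filter.mem_of_superset (hΩ.mem_nhds hyΩ) subset_closure)).fderiv

lemma loc_bdd {d : ℕ} {F : Type*} [NormedAddCommGroup F] [NormedSpace ℝ F]
    {Ω : Set (EuclideanSpace ℝ (Fin d))}
    (g : EuclideanSpace ℝ (Fin d) → F) {x : EuclideanSpace ℝ (Fin d)}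
    (hg : ContinuousWithinAt g (closure Ω) x) :
    ∃ C, ∀ᶠ y in nhdsWithin x Ω, ‖g y‖ ≤ C := by
  have h := (hg.mono (subset_closure)).norm
  refine ⟨‖g x‖ + 1, ?_⟩
  exact (h.eventually (gt_mem_nhds (lt_add_one _))).mono fun y hy => hy.le

lemma loc_fderiv_bdd {d : ℕ} {F : Type*} [NormedAddCommGroup F] [NormedSpace ℝ F]
    {Ω : Set (EuclideanSpace ℝ (Fin d))} (hΩ : IsOpen Ω)
    (g : EuclideanSpace ℝ (Fin d) → F) {x : EuclideanSpace ℝ (Fin d)} (hx : x ∈ closure Ω)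
    (hg : ContDiffWithinAt ℝ 1 g (closure Ω) x) :
    ∃ C, ∀ᶠ y in nhdsWithin x Ω, ‖fderiv ℝ g y‖ ≤ C := by
  obtain ⟨G, hG, V, hV, hxV, h⟩ := loc_data hΩ g (n := 0) hx (by simpa using hg)
  obtain ⟨C, hC⟩ := loc_bdd G hG.continuousWithinAt
  refine ⟨C, ?_⟩
  filter_upwards [hC, self_mem_nhdsWithin, mem_nhdsWithin_of_mem_nhds (hV.mem_nhds hxV)] with y h1 h2 h3
  rw [h y h3 h2]; exact h1

lemma loc_fderiv2_bdd {d : ℕ}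
    {Ω : Set (EuclideanSpace ℝ (Fin d))} (hΩ : IsOpen Ω)
    (g : EuclideanSpace ℝ (Fin d) → ℝ) {x : EuclideanSpace ℝ (Fin d)} (hx : x ∈ closure Ω)
    (hg : ContDiffWithinAt ℝ 2 g (closure Ω) x) :
    ∃ C, ∀ᶠ y in nhdsWithin x Ω, ‖fderiv ℝ (fderiv ℝ g) y‖ ≤ C := by
  obtain ⟨G, hG, V, hV, hxV, h⟩ := loc_data hΩ g (n := 1) hx (by simpa using hg)
  obtain ⟨C, hC⟩ := loc_fderiv_bdd hΩ G hx (by simpa using hG)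
  refine ⟨C, ?_⟩
  filter_upwards [hC, self_mem_nhdsWithin, mem_nhdsWithin_of_mem_nhds (hV.mem_nhds hxV)] with y h1 h2 h3
  have : fderiv ℝ g =ᶠ[nhds y] G := by
    filter_upwards [hV.mem_nhds h3, hΩ.mem_nhds h2] with z hz1 hz2 using h z hz1 hz2
  rw [this.fderiv_eq]; exact h1

/-- `C¹` with bounded derivative on `Ω` -/
def Good {d : ℕ} {F : Type*} [NormedAddCommGroup F] [NormedSpace ℝ F]
    (Ω : Set (EuclideanSpace ℝ (Fin d))) (g : EuclideanSpace ℝ (Fin d) → F) : Prop :=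
  (∀ x ∈ Ω, DifferentiableAt ℝ g x) ∧ (∃ C, ∀ x ∈ Ω, ‖g x‖ ≤ C) ∧
    ∃ C, ∀ x ∈ Ω, ‖fderiv ℝ g x‖ ≤ C

lemma good_of_contDiffOn {d : ℕ} {F : Type*} [NormedAddCommGroup F] [NormedSpace ℝ F]
    {Ω : Set (EuclideanSpace ℝ (Fin d))} (hΩ : IsOpen Ω) (hΩb : Bornology.IsBounded Ω)
    (g : EuclideanSpace ℝ (Fin d) → F) (hg : ContDiffOn ℝ 1 g (closure Ω)) : Good Ω g := by
  refine ⟨fun x hx => ?_, ?_, ?_⟩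
  · exact ((hg x (subset_closure hx)).contDiffAt
      (Filter.mem_of_superset (hΩ.mem_nhds hx) subset_closure)).differentiableAt (by simp)
  · exact bdd_of_loc hΩb _ fun x hx => loc_bdd g (hg x hx).continuousWithinAt
  · exact bdd_of_loc hΩb _ fun x hx => loc_fderiv_bdd hΩ g hx (hg x hx)

lemma good_smul {d : ℕ} {F : Type*} [NormedAddCommGroup F] [NormedSpace ℝ F]
    {Ω : Set (EuclideanSpace ℝ (Fin d))} 
    {s : EuclideanSpace ℝ (Fin d) → ℝ} {g : EuclideanSpace ℝ (Fin d) → F}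
    (hs : Good Ω s) (hg : Good Ω g) : Good Ω (fun x => s x • g x) := by
  obtain ⟨h1, ⟨C1, hC1⟩, D1, hD1⟩ := hs
  obtain ⟨h2, ⟨C2, hC2⟩, D2, hD2⟩ := hg
  refine ⟨fun x hx => (h1 x hx).smul (h2 x hx), ⟨C1 * C2, fun x hx => ?_⟩,
    C1 * D2 + D1 * C2, fun x hx => ?_⟩
  · rw [norm_smul]
    have := hC1 x hx
    have := hC2 x hx
    have := (norm_nonneg (s x)).trans (hC1 x hx)
    gcongr
  · rw [fderiv_fun_smul (h1 x hx) (h2 x hx)]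
    refine (norm_add_le _ _).trans ?_
    have a1 := hC1 x hx
    have a2 := hC2 x hx
    have a3 := hD1 x hx
    have a4 := hD2 x hx
    have b1 := (norm_nonneg _).trans a1
    have b3 := (norm_nonneg _).trans a3
    rw [norm_smul, ContinuousLinearMap.norm_smulRight_apply]
    gcongr

lemma exists_gradCLM (d : ℕ) : ∃ T : (EuclideanSpace ℝ (Fin d) →L[ℝ] ℝ) →L[ℝ] EuclideanSpace ℝ (Fin d),
    ∀ L, T L = (InnerProductSpace.toDual ℝ (EuclideanSpace ℝ (Fin d))).symm L := by
  refine ⟨LinearMap.mkContinuous ⟨⟨fun L => (InnerProductSpace.toDual ℝ (EuclideanSpace ℝ (Fin d))).symm L, ?_⟩, ?_⟩ 1 ?_, fun L => rfl⟩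
  · intro a b; simp
  · intro a b; simp
  · intro L; simp

lemma good_gradient {d : ℕ} 
    {Ω : Set (EuclideanSpace ℝ (Fin d))} (hΩ : IsOpen Ω) (hΩb : Bornology.IsBounded Ω)
    (u : EuclideanSpace ℝ (Fin d) → ℝ) (hu : ContDiffOn ℝ 2 u (closure Ω)) :
    Good Ω (gradient u) := by
  obtain ⟨T, hT⟩ := exists_gradCLM d
  have e : gradient u = fun x => T (fderiv ℝ u x) := by
    funext x; rw [hT]; rfl
  have hd : ∀ x ∈ Ω, DifferentiableAt ℝ (fderiv ℝ u) x := fun x hx =>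
    (((hu x (subset_closure hx)).contDiffAt
      (Filter.mem_of_superset (hΩ.mem_nhds hx) subset_closure)).fderiv_right
        (m := 1) (by norm_num)).differentiableAt (by simp)
  obtain ⟨C, hC⟩ := (good_of_contDiffOn hΩ hΩb u (hu.of_le (by norm_num))).2.2
  obtain ⟨D, hD⟩ := bdd_of_loc hΩb _ fun x hx => loc_fderiv2_bdd hΩ u hx (hu x hx)
  rw [e]
  refine ⟨fun x hx => T.differentiableAt.comp x (hd x hx), ⟨‖T‖ * C, fun x hx => ?_⟩,
    ‖T‖ * D, fun x hx => ?_⟩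
  · exact (T.le_opNorm _).trans (by have := hC x hx; gcongr)
  · have : fderiv ℝ (fun x => T (fderiv ℝ u x)) x = T.comp (fderiv ℝ (fderiv ℝ u) x) :=
      (T.hasFDerivAt.comp x (hd x hx).hasFDerivAt).fderiv
    rw [this]
    exact (ContinuousLinearMap.opNorm_comp_le _ _).trans (by have := hD x hx; gcongr)

lemma exit_bound {d : ℕ} {F : Type*} [NormedAddCommGroup F] [NormedSpace ℝ F]
    {Ω : Set (EuclideanSpace ℝ (Fin d))} (hΩ : IsOpen Ω)
    {W : EuclideanSpace ℝ (Fin d) → F} (hW : Continuous W) (h0 : ∀ x ∉ Ω, W x = 0)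
    (hd : ∀ x ∈ Ω, DifferentiableAt ℝ W x) {C : ℝ} (hC : 0 ≤ C)
    (hb : ∀ x ∈ Ω, ‖fderiv ℝ W x‖ ≤ C)
    (x z : EuclideanSpace ℝ (Fin d)) (hz : z ∉ Ω) : ‖W x‖ ≤ C * ‖z - x‖ := by
  let γ : ℝ → EuclideanSpace ℝ (Fin d) := fun t => x + t • (z - x)
  have hγ : Continuous γ := by fun_prop
  let S : Set ℝ := Set.Icc 0 1 ∩ γ ⁻¹' Ωᶜ
  have hS : IsCompact S := isCompact_Icc.inter_right (hΩ.isClosed_compl.preimage hγ)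
  have hne : S.Nonempty := ⟨1, ⟨by norm_num, by norm_num⟩, by simpa [γ] using hz⟩
  obtain ⟨t, ht, hmin⟩ := hS.exists_isLeast hne
  have hin : ∀ s ∈ Set.Ico 0 t, γ s ∈ Ω := by
    intro s hs
    by_contra h
    have := hmin (show s ∈ S from ⟨⟨hs.1, hs.2.le.trans ht.1.2⟩, h⟩)
    exact absurd hs.2 (not_lt.2 this)
  have key := norm_image_sub_le_of_norm_deriv_right_le_segment (f := fun s => W (γ s))
    (f' := fun s => fderiv ℝ W (γ s) (z - x)) (a := 0) (b := t) (C := C * ‖z - x‖)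
    (hW.comp hγ).continuousOn
    (fun s hs => by
      have h1 : HasDerivAt γ (z - x) s := by
        have h := ((hasDerivAt_id s).smul_const (z - x)).const_add x
        rw [one_smul] at h
        exact h
      exact ((hd _ (hin s hs)).hasFDerivAt.comp_hasDerivAt s h1).hasDerivWithinAt)
    (fun s hs => (ContinuousLinearMap.le_opNorm _ _).trans (by
      have := hb _ (hin s hs)
      gcongr)) t ⟨ht.1.1, le_rfl⟩
  have e1 : W (γ t) = 0 := h0 _ ht.2
  have e2 : γ 0 = x := by simp [γ]
  simp only [e1, e2, zero_sub, norm_neg, sub_zero] at key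
  refine key.trans ?_
  have := ht.1.2
  have : 0 ≤ C * ‖z - x‖ := by positivity
  nlinarith

lemma lip_of {d : ℕ} {F : Type*} [NormedAddCommGroup F] [NormedSpace ℝ F]
    {Ω : Set (EuclideanSpace ℝ (Fin d))} (hΩ : IsOpen Ω)
    {W : EuclideanSpace ℝ (Fin d) → F} (hW : Continuous W) (h0 : ∀ x ∉ Ω, W x = 0)
    (hd : ∀ x ∈ Ω, DifferentiableAt ℝ W x) {C : ℝ} (hC : 0 ≤ C)
    (hb : ∀ x ∈ Ω, ‖fderiv ℝ W x‖ ≤ C) : LipschitzWith (Real.toNNReal C) W := by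
  refine LipschitzWith.of_dist_le_mul fun x y => ?_
  rw [Real.coe_toNNReal C hC, dist_eq_norm, dist_eq_norm]
  by_cases h : segment ℝ y x ⊆ Ω
  · exact (convex_segment y x).norm_image_sub_le_of_norm_fderiv_le (fun z hz => hd z (h hz))
      (fun z hz => hb z (h hz)) (left_mem_segment ℝ y x) (right_mem_segment ℝ y x)
  · obtain ⟨z, hz, hzΩ⟩ := Set.not_subset.1 h
    have h1 := exit_bound hΩ hW h0 hd hC hb x z hzΩ
    have h2 := exit_bound hΩ hW h0 hd hC hb y z hzΩ
    have h3 := dist_add_dist_of_mem_segment hz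
    rw [dist_eq_norm, dist_eq_norm, dist_eq_norm] at h3
    calc ‖W x - W y‖ ≤ ‖W x‖ + ‖W y‖ := norm_sub_le _ _
      _ ≤ C * ‖z - x‖ + C * ‖z - y‖ := add_le_add h1 h2
      _ = C * ‖x - y‖ := by rw [norm_sub_rev x y, ← h3, norm_sub_rev y z]; ring

lemma div_zero_of {d : ℕ} {Ω : Set (EuclideanSpace ℝ (Fin d))} (hΩ : IsOpen Ω)
    (hΩb : Bornology.IsBounded Ω)
    {W : EuclideanSpace ℝ (Fin d) → EuclideanSpace ℝ (Fin d)} {K : NNReal}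
    (hW : LipschitzWith K W) (h0 : ∀ x ∉ Ω, W x = 0)
    (hd : ∀ x ∈ Ω, DifferentiableAt ℝ W x) :
    IntegrableOn (ediv W) Ω ∧ ∫ x in Ω, ediv W x = 0 := by
  have hfin : IsFiniteMeasure (volume.restrict Ω) := ⟨by
    simpa using hΩb.measure_lt_top⟩
  have hlip : ∀ i : Fin d, LipschitzWith K (fun x => W x i) := fun i =>
    LipschitzWith.of_dist_le_mul fun x y => by
      refine le_trans ?_ (hW.dist_le_mul x y)
      rw [dist_eq_norm, dist_eq_norm]
      exact PiLp.norm_apply_le (W x - W y) i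
  have hder : ∀ x, DifferentiableAt ℝ W x → ∀ i : Fin d, ∀ v,
      lineDeriv ℝ (fun x => W x i) x v = fderiv ℝ W x v i := by
    intro x hx i v
    have h1 : HasFDerivAt (fun x => W x i)
        ((EuclideanSpace.proj (𝕜 := ℝ) i).comp (fderiv ℝ W x)) x :=
      (EuclideanSpace.proj (𝕜 := ℝ) i : EuclideanSpace ℝ (Fin d) →L[ℝ] ℝ).hasFDerivAt.comp x hx.hasFDerivAt
    rw [(h1.hasLineDerivAt v).lineDeriv]
    rfl
  have hint : ∀ i : Fin d, IntegrableOn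
      (fun x => lineDeriv ℝ (fun x => W x i) x (EuclideanSpace.single i 1)) Ω := fun i =>
    MemLp.integrable (by exact le_top) ((hlip i).memLp_lineDeriv (μ := volume.restrict Ω) _)
  have hae : ∀ᵐ x ∂(volume : Measure (EuclideanSpace ℝ (Fin d))), x ∉ Ω →
      ∀ i : Fin d, lineDeriv ℝ (fun x => W x i) x (EuclideanSpace.single i 1) = 0 := by
    let s : Set (EuclideanSpace ℝ (Fin d)) := Ωᶜ ∩ {x | DifferentiableAt ℝ W x}
    have hs : MeasurableSet s := hΩ.measurableSet.compl.inter (measurableSet_of_differentiableAt ℝ W)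
    have hap : ApproximatesLinearOn W (0 : EuclideanSpace ℝ (Fin d) →L[ℝ] EuclideanSpace ℝ (Fin d)) s 0 := by
      intro x hx y hy
      simp [h0 x hx.1, h0 y hy.1]
    have h1 := hap.norm_fderiv_sub_le volume hs (fderiv ℝ W)
      fun x hx => hx.2.hasFDerivAt.hasFDerivWithinAt
    rw [ae_restrict_iff' hs] at h1
    filter_upwards [h1, hW.ae_differentiableAt] with x hx1 hx2 hx3 i
    have h2 := hx1 ⟨hx3, hx2⟩
    have h3 : fderiv ℝ W x = 0 := by simpa using h2
    rw [hder x hx2, h3]; rfl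
  have hcs : ∀ i : Fin d, HasCompactSupport (fun x => W x i) := fun i =>
    HasCompactSupport.intro' hΩb.isCompact_closure isClosed_closure fun x hx => by
      rw [h0 x fun h => hx (subset_closure h)]; rfl
  have hzero : ∀ i : Fin d,
      ∫ x in Ω, lineDeriv ℝ (fun x => W x i) x (EuclideanSpace.single i 1) = 0 := by
    intro i
    rw [setIntegral_eq_integral_of_ae_compl_eq_zero
      (hae.mono fun x hx hxΩ => hx hxΩ i)]
    have := LipschitzWith.integral_lineDeriv_mul_eq (μ := volume)
      (LipschitzWith.const (1 : ℝ) (α := EuclideanSpace ℝ (Fin d))) (hlip i) (hcs i)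
      (-(EuclideanSpace.single i 1))
    simpa [lineDeriv] using this.symm
  have heq : Set.EqOn (ediv W)
      (fun x => ∑ i, lineDeriv ℝ (fun x => W x i) x (EuclideanSpace.single i 1)) Ω := by
    intro x hx
    simp only [ediv]
    exact Finset.sum_congr rfl fun i _ => (hder x (hd x hx) i _).symm
  refine ⟨?_, ?_⟩
  · exact IntegrableOn.congr_fun (integrable_finsetSum _ fun i _ => hint i) heq.symm hΩ.measurableSet
  · rw [setIntegral_congr_fun hΩ.measurableSet heq, integral_finsetSum _ fun i _ => hint i]
    exact Finset.sum_eq_zero fun i _ => hzero i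

lemma ediv_smul {d : ℕ} {s : EuclideanSpace ℝ (Fin d) → ℝ}
    {V : EuclideanSpace ℝ (Fin d) → EuclideanSpace ℝ (Fin d)} {x : EuclideanSpace ℝ (Fin d)}
    (hs : DifferentiableAt ℝ s x) (hV : DifferentiableAt ℝ V x) :
    ediv (fun y => s y • V y) x = s x * ediv V x + fderiv ℝ s x (V x) := by
  have hsum : V x = ∑ i, V x i • EuclideanSpace.single i (1 : ℝ) := by
    simpa using ((EuclideanSpace.basisFun (Fin d) ℝ).sum_repr (V x)).symm
  conv_rhs => rw [hsum]
  simp only [ediv, fderiv_fun_smul hs hV, map_sum, map_smul, Finset.mul_sum]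
  rw [← Finset.sum_add_distrib]
  refine Finset.sum_congr rfl fun i _ => ?_
  simp [mul_comm]

lemma cont_ext {d : ℕ} {F : Type*} [NormedAddCommGroup F] [NormedSpace ℝ F]
    {Ω : Set (EuclideanSpace ℝ (Fin d))} (hΩ : IsOpen Ω)
    {W : EuclideanSpace ℝ (Fin d) → F} (hW : ∀ x ∈ Ω, ContinuousAt W x)
    {u : EuclideanSpace ℝ (Fin d) → ℝ} (hu : ContinuousOn u (closure Ω))
    (hu0 : ∀ x ∈ frontier Ω, u x = 0) {M : ℝ} (hM : ∀ x ∈ Ω, ‖W x‖ ≤ M * |u x|) :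
    Continuous (Ω.indicator W) := by
  rw [continuous_iff_continuousAt]
  intro x
  by_cases hx : x ∈ Ω
  · refine (hW x hx).congr ?_
    filter_upwards [hΩ.mem_nhds hx] with y hy
    rw [Set.indicator_of_mem hy]
  · have hlim : Filter.Tendsto (fun y => M * |u y|) (nhdsWithin x Ω) (nhds 0) := by
      by_cases hxc : x ∈ closure Ω
      · have hux : u x = 0 := hu0 x ⟨hxc, by rwa [hΩ.interior_eq]⟩
        have h1 := ((hu x hxc).mono subset_closure).abs.const_mul M
        simpa [ContinuousWithinAt, hux] using h1
      · rw [notMem_closure_iff_nhdsWithin_eq_bot.1 hxc]; exact Filter.tendsto_bot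
    rw [ContinuousAt, Set.indicator_of_notMem hx, Metric.tendsto_nhds]
    intro ε hε
    have h2 := hlim.eventually (gt_mem_nhds hε)
    rw [eventually_nhdsWithin_iff] at h2
    filter_upwards [h2] with y hy
    by_cases hyΩ : y ∈ Ω
    · rw [Set.indicator_of_mem hyΩ, dist_zero_right]
      exact (hM y hyΩ).trans_lt (hy hyΩ)
    · rw [Set.indicator_of_notMem hyΩ, dist_self]; exact hε

/-- Key algebraic identity (proof of Theorem 3.2): if `−div(q∇u) = f` in `Ω` and
`u` vanishes on `∂Ω`, then with the test function `φ = (p/q)·u`,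
`∫_Ω p ∇u·∇φ = ½ ∫_Ω (p/q)² (q|∇u|² + f u)`. -/
theorem test_function_identity
    {d : ℕ} (Ω : Set (EuclideanSpace ℝ (Fin d)))
    (hΩ : IsOpen Ω) (hΩb : Bornology.IsBounded Ω)
    (q u p f : EuclideanSpace ℝ (Fin d) → ℝ) (c₀ : ℝ) (hc₀ : 0 < c₀)
    -- regularity: `q ∈ C¹(Ω̄)`, `u ∈ C²` near `Ω̄`, `p ∈ H¹ ∩ L^∞`
    (hq : ContDiffOn ℝ 1 q (closure Ω))
    (hqpos : ∀ x ∈ closure Ω, c₀ ≤ q x)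
    (hu : ContDiffOn ℝ 2 u (closure Ω))
    (hp : ContDiffOn ℝ 1 p (closure Ω))
    (hpbd : ∃ K, ∀ x ∈ closure Ω, |p x| ≤ K)
    (hpH1 : IntegrableOn (fun x => ‖gradient p x‖ ^ 2) Ω volume)
    -- `u ∈ H₀¹(Ω)` : homogeneous Dirichlet boundary condition
    (hu0 : ∀ x ∈ frontier Ω, u x = 0)
    -- the elliptic equation `−div(q∇u) = f` in `Ω`
    (hpde : ∀ x ∈ Ω, -(ediv (fun y => q y • gradient u y) x) = f x) :
    (∫ x in Ω, p x * ⟪gradient u x, gradient (fun y => (p y / q y) * u y) x⟫)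
      = (1 / 2) * ∫ x in Ω,
          (p x / q x) ^ 2 * (q x * ‖gradient u x‖ ^ 2 + f x * u x) := by
  have hcl : Ω ⊆ closure Ω := subset_closure
  have hqne : ∀ x ∈ closure Ω, q x ≠ 0 := fun x hx => (hc₀.trans_le (hqpos x hx)).ne'
  have hr : ContDiffOn ℝ 1 (fun x => p x / q x) (closure Ω) := hp.div hq hqne
  have hu1 : ContDiffOn ℝ 1 u (closure Ω) := hu.of_le (by norm_num)
  have hs : ContDiffOn ℝ 1 (fun x => (p x / q x) ^ 2 * u x) (closure Ω) := (hr.pow 2).mul hu1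
  have gr := good_of_contDiffOn hΩ hΩb _ hr
  have gr2 := good_of_contDiffOn hΩ hΩb _ (hr.pow 2)
  have gs := good_of_contDiffOn hΩ hΩb _ hs
  have gu := good_of_contDiffOn hΩ hΩb _ hu1
  have gV : Good Ω (fun y => q y • gradient u y) :=
    good_smul (good_of_contDiffOn hΩ hΩb _ hq) (good_gradient hΩ hΩb u hu)
  have gW := good_smul gs gV
  have gA := good_smul gr2 gV
  set W : EuclideanSpace ℝ (Fin d) → EuclideanSpace ℝ (Fin d) :=
    fun x => ((p x / q x) ^ 2 * u x) • (q x • gradient u x) with hWdef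
  have hloc : ∀ x ∈ Ω, Ω.indicator W =ᶠ[nhds x] W := fun x hx => by
    filter_upwards [hΩ.mem_nhds hx] with y hy
    rw [Set.indicator_of_mem hy]
  obtain ⟨M, hM⟩ := gA.2.1
  obtain ⟨C, hC⟩ := gW.2.2
  have hcont : Continuous (Ω.indicator W) := by
    refine cont_ext hΩ (fun x hx => (gW.1 x hx).continuousAt) hu.continuousOn hu0 (M := M) ?_
    intro x hx
    have e : W x = u x • ((p x / q x) ^ 2 • (q x • gradient u x)) := by
      simp only [hWdef, smul_smul]; congr 1; ring
    rw [e, norm_smul, Real.norm_eq_abs, mul_comm]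
    exact mul_le_mul_of_nonneg_right (hM x hx) (abs_nonneg _)
  have hdI : ∀ x ∈ Ω, DifferentiableAt ℝ (Ω.indicator W) x := fun x hx =>
    (hloc x hx).differentiableAt_iff.2 (gW.1 x hx)
  have h0 : ∀ x ∉ Ω, Ω.indicator W x = 0 := fun x hx => Set.indicator_of_notMem hx _
  have hlip := lip_of hΩ hcont h0 hdI (C := max C 0) (le_max_right _ _) (fun x hx => by
    rw [(hloc x hx).fderiv_eq]; exact (hC x hx).trans (le_max_left _ _))
  obtain ⟨hI, hZ⟩ := div_zero_of hΩ hΩb hlip h0 hdI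
  have hpt : Set.EqOn
      (fun x => p x * ⟪gradient u x, gradient (fun y => (p y / q y) * u y) x⟫)
      (fun x => (1 / 2) * ((p x / q x) ^ 2 * (q x * ‖gradient u x‖ ^ 2 + f x * u x))
        + (1 / 2) * ediv (Ω.indicator W) x) Ω := by
    intro x hx
    have e1 : ediv (Ω.indicator W) x = ediv W x := by
      simp only [ediv, (hloc x hx).fderiv_eq]
    have e2 := ediv_smul (gs.1 x hx) (gV.1 x hx)
    have e3 : ediv (fun y => q y • gradient u y) x = - f x := by rw [← hpde x hx]; ring
    have dr := (gr.1 x hx).hasFDerivAt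
    have du := (gu.1 x hx).hasFDerivAt
    have e4 := (dr.mul du).fderiv
    have e5 := ((dr.pow 2).mul du).fderiv
    have e6 : fderiv ℝ u x (gradient u x) = ‖gradient u x‖ ^ 2 := by
      rw [← inner_gradient_left, real_inner_self_eq_norm_sq]
    have hq0 := hqne x (hcl hx)
    have e7 : ⟪gradient u x, gradient (fun y => (p y / q y) * u y) x⟫
        = (p x / q x) * ‖gradient u x‖ ^ 2
          + u x * fderiv ℝ (fun x => p x / q x) x (gradient u x) := by
      rw [real_inner_comm, inner_gradient_left]
      erw [e4]
      simp [e6]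
    have e8 : fderiv ℝ (fun x => (p x / q x) ^ 2 * u x) x (gradient u x)
        = (p x / q x) ^ 2 * ‖gradient u x‖ ^ 2
          + u x * (2 * (p x / q x) * fderiv ℝ (fun x => p x / q x) x (gradient u x)) := by
      erw [e5]
      simp [e6]
    have e9 : p x = (p x / q x) * q x := by field_simp
    simp only
    rw [e1, e2, e3, e7, map_smul, e8, smul_eq_mul]
    generalize fderiv ℝ (fun x => p x / q x) x (gradient u x) = a
    generalize ‖gradient u x‖ = b
    rw [show p x * (p x / q x * b ^ 2 + u x * a)
      = (p x / q x) * q x * (p x / q x * b ^ 2 + u x * a) by rw [← e9]]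
    ring
  rw [setIntegral_congr_fun hΩ.measurableSet hpt]
  have hI2 : Integrable (fun x => (1 / 2) * ediv (Ω.indicator W) x) (volume.restrict Ω) :=
    hI.const_mul _
  rw [← integral_const_mul]
  by_cases hR : Integrable (fun x => (1 / 2) * ((p x / q x) ^ 2 *
      (q x * ‖gradient u x‖ ^ 2 + f x * u x))) (volume.restrict Ω)
  · rw [integral_add hR hI2, integral_const_mul (1 / 2) (fun x => ediv (Ω.indicator W) x), hZ]
    simp
  · rw [integral_undef hR, integral_undef]
    rwa [integrable_add_iff_integrable_left' hI2]
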